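/- arXiv:2109.01899 — 7 statements merged into one kernel-verified Lean document; each statement's English description precedes it below -/
import Mathlib

section
/- Positivity of the energy–momentum tensor (Lemma `emtensorpositivity`, Minkowski case): let X, N ∈ ℝ⁴ be timelike and future-directed, i.e. η(X,X) < 0, η(N,N) < 0, X₀ > 0 and N₀ > 0. Then there exists a constant d₀ > 0 (depending on X and N) such that for every Z ∈ ℝ⁴ one has 2·η(Z,X)·η(Z,N) − η(X,N)·η(Z,Z) ≥ d₀·‖Z‖², where ‖Z‖ is the Euclidean norm of Z. -/
noncomputable section

/-- The Minkowski inner product on `ℝ⁴`: `η(X,Y) = -X₀Y₀ + X₁Y₁ + X₂Y₂ + X₃Y₃`. -/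
def eta (X Y : Fin 4 → ℝ) : ℝ :=
  -(X 0 * Y 0) + X 1 * Y 1 + X 2 * Y 2 + X 3 * Y 3

lemma cs_aux (a b c x y z r : ℝ) (hr : 0 ≤ r) (h : r ^ 2 = x ^ 2 + y ^ 2 + z ^ 2) (t : ℝ) :
    0 ≤ r * (t ^ 2 + a ^ 2 + b ^ 2 + c ^ 2) - 2 * t * (a * x + b * y + c * z) := by
  rcases hr.eq_or_lt with h0 | h0
  · subst h0
    have hx : x = 0 := by nlinarith [sq_nonneg x, sq_nonneg y, sq_nonneg z]
    have hy : y = 0 := by nlinarith [sq_nonneg x, sq_nonneg y, sq_nonneg z]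
    have hz : z = 0 := by nlinarith [sq_nonneg x, sq_nonneg y, sq_nonneg z]
    subst hx hy hz
    simp
  · have key : r * (r * (t ^ 2 + a ^ 2 + b ^ 2 + c ^ 2) - 2 * t * (a * x + b * y + c * z))
        = (r * a - t * x) ^ 2 + (r * b - t * y) ^ 2 + (r * c - t * z) ^ 2 := by
      linear_combination t ^ 2 * h
    refine nonneg_of_mul_nonneg_right (a := r) ?_ h0
    rw [key]; positivity

set_option maxHeartbeats 1000000 in
lemma null_aux (a b c x y z r u v w q t : ℝ) (hr : 0 ≤ r) (hq : 0 ≤ q)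
    (h : r ^ 2 = x ^ 2 + y ^ 2 + z ^ 2) (k : q ^ 2 = u ^ 2 + v ^ 2 + w ^ 2) :
    0 ≤ 2 * (-(t * r) + a * x + b * y + c * z) * (-(t * q) + a * u + b * v + c * w)
      - (-(r * q) + x * u + y * v + z * w) * (-(t * t) + a * a + b * b + c * c) := by
  rcases hr.eq_or_lt with h0 | h0
  · subst h0
    have hx : x = 0 := by nlinarith [sq_nonneg x, sq_nonneg y, sq_nonneg z]
    have hy : y = 0 := by nlinarith [sq_nonneg x, sq_nonneg y, sq_nonneg z]
    have hz : z = 0 := by nlinarith [sq_nonneg x, sq_nonneg y, sq_nonneg z]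
    subst hx hy hz
    simp
  rcases hq.eq_or_lt with k0 | k0
  · subst k0
    have hx : u = 0 := by nlinarith [sq_nonneg u, sq_nonneg v, sq_nonneg w]
    have hy : v = 0 := by nlinarith [sq_nonneg u, sq_nonneg v, sq_nonneg w]
    have hz : w = 0 := by nlinarith [sq_nonneg u, sq_nonneg v, sq_nonneg w]
    subst hx hy hz
    simp
  set Q := 2 * (-(t * r) + a * x + b * y + c * z) * (-(t * q) + a * u + b * v + c * w)
      - (-(r * q) + x * u + y * v + z * w) * (-(t * t) + a * a + b * b + c * c) with hQ
  obtain ⟨w1, e1⟩ : ∃ s, s = r * u + q * x := ⟨_, rfl⟩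
  obtain ⟨w2, e2⟩ : ∃ s, s = r * v + q * y := ⟨_, rfl⟩
  obtain ⟨w3, e3⟩ : ∃ s, s = r * w + q * z := ⟨_, rfl⟩
  obtain ⟨d1, f1⟩ : ∃ s, s = r * u - q * x := ⟨_, rfl⟩
  obtain ⟨d2, f2⟩ : ∃ s, s = r * v - q * y := ⟨_, rfl⟩
  obtain ⟨d3, f3⟩ : ∃ s, s = r * w - q * z := ⟨_, rfl⟩
  have orth : w1 * d1 + w2 * d2 + w3 * d3 = 0 := by
    subst e1 e2 e3 f1 f2 f3
    linear_combination q ^ 2 * h - r ^ 2 * k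
  have hW : w1 ^ 2 + w2 ^ 2 + w3 ^ 2 = 2 * r * q * (r * q + (x * u + y * v + z * w)) := by
    subst e1 e2 e3
    linear_combination (-q ^ 2) * h - r ^ 2 * k
  have hD : d1 ^ 2 + d2 ^ 2 + d3 ^ 2 = 2 * r * q * (r * q - (x * u + y * v + z * w)) := by
    subst f1 f2 f3
    linear_combination (-q ^ 2) * h - r ^ 2 * k
  have h4 : 4 * (r * q) * ((a * x + b * y + c * z) * (a * u + b * v + c * w))
      = (a * w1 + b * w2 + c * w3) ^ 2 - (a * d1 + b * d2 + c * d3) ^ 2 := by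
    subst e1 e2 e3 f1 f2 f3; ring
  have hz : r * (a * u + b * v + c * w) + q * (a * x + b * y + c * z)
      = a * w1 + b * w2 + c * w3 := by
    subst e1 e2 e3; ring
  have hQ2 : 2 * (r * q) * Q = (w1 ^ 2 + w2 ^ 2 + w3 ^ 2) * t ^ 2
      - 4 * (r * q) * t * (a * w1 + b * w2 + c * w3) + (a * w1 + b * w2 + c * w3) ^ 2
      - (a * d1 + b * d2 + c * d3) ^ 2
      + (d1 ^ 2 + d2 ^ 2 + d3 ^ 2) * (a ^ 2 + b ^ 2 + c ^ 2) := by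
    rw [hQ]
    linear_combination h4 - t ^ 2 * hW - (a ^ 2 + b ^ 2 + c ^ 2) * hD - 4 * (r * q) * t * hz
  have hsum : w1 ^ 2 + w2 ^ 2 + w3 ^ 2 + (d1 ^ 2 + d2 ^ 2 + d3 ^ 2) = 4 * (r * q) ^ 2 := by
    rw [hW, hD]; ring
  have hrq : 0 < r * q := mul_pos h0 k0
  clear_value Q
  clear hQ h4 hz hW hD e1 e2 e3 f1 f2 f3 h k
  refine nonneg_of_mul_nonneg_right (a := 2 * (r * q)) ?_ (by positivity)
  have hWn : 0 ≤ w1 ^ 2 + w2 ^ 2 + w3 ^ 2 := by positivity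
  rcases hWn.eq_or_lt with hw | hw
  · have g1 : w1 = 0 := by nlinarith [sq_nonneg w1, sq_nonneg w2, sq_nonneg w3]
    have g2 : w2 = 0 := by nlinarith [sq_nonneg w1, sq_nonneg w2, sq_nonneg w3]
    have g3 : w3 = 0 := by nlinarith [sq_nonneg w1, sq_nonneg w2, sq_nonneg w3]
    rw [hQ2, g1, g2, g3]
    have e := add_nonneg (add_nonneg (sq_nonneg (a * d2 - b * d1)) (sq_nonneg (a * d3 - c * d1)))
      (sq_nonneg (b * d3 - c * d2))
    refine e.trans_eq ?_
    ring
  · refine nonneg_of_mul_nonneg_right (a := w1 ^ 2 + w2 ^ 2 + w3 ^ 2) ?_ hw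
    -- Gram determinant of `z, w, d` as a square, using `w ⟂ d`
    have gram : (w1 ^ 2 + w2 ^ 2 + w3 ^ 2) * ((d1 ^ 2 + d2 ^ 2 + d3 ^ 2) * (a ^ 2 + b ^ 2 + c ^ 2)
          - (a * d1 + b * d2 + c * d3) ^ 2)
        = (d1 ^ 2 + d2 ^ 2 + d3 ^ 2) * (a * w1 + b * w2 + c * w3) ^ 2
          + (a * (w2 * d3 - w3 * d2) + b * (w3 * d1 - w1 * d3) + c * (w1 * d2 - w2 * d1)) ^ 2 := by
      linear_combination ((w1 * d1 + w2 * d2 + w3 * d3) * (a ^ 2 + b ^ 2 + c ^ 2)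
        - 2 * (a * w1 + b * w2 + c * w3) * (a * d1 + b * d2 + c * d3)) * orth
    have fin : (w1 ^ 2 + w2 ^ 2 + w3 ^ 2) * (2 * (r * q) * Q)
        = ((w1 ^ 2 + w2 ^ 2 + w3 ^ 2) * t - 2 * (r * q) * (a * w1 + b * w2 + c * w3)) ^ 2
          + (a * (w2 * d3 - w3 * d2) + b * (w3 * d1 - w1 * d3) + c * (w1 * d2 - w2 * d1)) ^ 2 := by
      rw [hQ2]
      linear_combination gram + (a * w1 + b * w2 + c * w3) ^ 2 * hsum
    rw [fin]; positivity

/-- Positivity of the energy–momentum tensor (Lemma `emtensorpositivity`, Minkowski case). -/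
theorem emtensor_positivity (X N : Fin 4 → ℝ)
    (hX : eta X X < 0) (hN : eta N N < 0)
    (hX0 : 0 < X 0) (hN0 : 0 < N 0) :
    ∃ d₀ > (0 : ℝ), ∀ Z : Fin 4 → ℝ,
      2 * eta Z X * eta Z N - eta X N * eta Z Z ≥
        d₀ * ((Z 0) ^ 2 + (Z 1) ^ 2 + (Z 2) ^ 2 + (Z 3) ^ 2) := by
  simp only [eta] at *
  obtain ⟨r, hr, h⟩ : ∃ r : ℝ, 0 ≤ r ∧ r ^ 2 = X 1 ^ 2 + X 2 ^ 2 + X 3 ^ 2 :=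
    ⟨_, Real.sqrt_nonneg _, Real.sq_sqrt (by positivity)⟩
  obtain ⟨q, hq, k⟩ : ∃ r : ℝ, 0 ≤ r ∧ r ^ 2 = N 1 ^ 2 + N 2 ^ 2 + N 3 ^ 2 :=
    ⟨_, Real.sqrt_nonneg _, Real.sq_sqrt (by positivity)⟩
  have hrX : 0 < X 0 - r := by nlinarith
  have hqN : 0 < N 0 - q := by nlinarith
  refine ⟨(X 0 - r) * (N 0 - q), mul_pos hrX hqN, fun Z => ?_⟩
  have A := null_aux (Z 1) (Z 2) (Z 3) (X 1) (X 2) (X 3) r (N 1) (N 2) (N 3) q (Z 0) hr hq h k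
  have B := mul_nonneg hqN.le (cs_aux (Z 1) (Z 2) (Z 3) (X 1) (X 2) (X 3) r hr h (Z 0))
  have C := mul_nonneg hrX.le (cs_aux (Z 1) (Z 2) (Z 3) (N 1) (N 2) (N 3) q hq k (Z 0))
  linarith
end
end

section
/- Quantitative positivity of the energy–momentum tensor (the bound (QZXN)/(alphanotation) from the proof of Lemma `emtensorpositivity`): let N ∈ ℝ⁴ satisfy η(N,N) = −1 and N₀ > 0, and let X ∈ ℝ⁴ be timelike and future-directed (η(X,X) < 0, X₀ > 0). Set α = −η(X,X) / ( (η(X,X) + η(X,N)²)^{1/2} − η(X,N) ). Then α > 0 and for every Z ∈ ℝ⁴, 2·η(Z,X)·η(Z,N) − η(X,N)·η(Z,Z) ≥ α·( η(Z,Z) + 2·η(Z,N)² ). (Here η(Z,Z) + 2 η(Z,N)² = η(Z,N)² + η(P_N Z, P_N Z) ≥ 0, where P_N Z = Z + η(Z,N) N is the projection of Z orthogonal to N.) -/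
noncomputable section

theorem aux_nonneg (N Z : Fin 4 → ℝ) (hN : eta N N = -1) (hN0 : 0 < N 0) :
    0 ≤ eta Z Z + (eta Z N) ^ 2 := by
  have h : 0 ≤ (N 0) ^ 2 * (eta Z Z + (eta Z N) ^ 2) := by
    have e : (N 0) ^ 2 * (eta Z Z + (eta Z N) ^ 2) =
        (eta Z N * N 1 + Z 1) ^ 2 + (eta Z N * N 2 + Z 2) ^ 2 + (eta Z N * N 3 + Z 3) ^ 2
        + (Z 1 * N 2 - Z 2 * N 1) ^ 2 + (Z 1 * N 3 - Z 3 * N 1) ^ 2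
        + (Z 2 * N 3 - Z 3 * N 2) ^ 2 := by
      unfold eta at *
      have e0 : (N 0) ^ 2 = 1 + N 1 ^ 2 + N 2 ^ 2 + N 3 ^ 2 := by linarith
      linear_combination ((-(Z 0 * N 0) + Z 1 * N 1 + Z 2 * N 2 + Z 3 * N 3) ^ 2
        + Z 1 ^ 2 + Z 2 ^ 2 + Z 3 ^ 2) * e0
    rw [e]; positivity
  exact nonneg_of_mul_nonneg_right h (by positivity)

theorem aux_neg (X N : Fin 4 → ℝ) (hN : eta N N = -1) (hN0 : 0 < N 0)
    (hX : eta X X < 0) (hX0 : 0 < X 0) : eta X N < 0 := by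
  unfold eta at *
  have h : (X 1 * N 1 + X 2 * N 2 + X 3 * N 3) ^ 2 < (X 0 * N 0) ^ 2 := by
    have e0 : (N 0) ^ 2 = 1 + N 1 ^ 2 + N 2 ^ 2 + N 3 ^ 2 := by linarith
    have h1 : (X 1 ^ 2 + X 2 ^ 2 + X 3 ^ 2) * (N 0) ^ 2 < (X 0) ^ 2 * (N 0) ^ 2 :=
      mul_lt_mul_of_pos_right (by linarith) (by positivity)
    rw [mul_pow]
    refine lt_of_le_of_lt ?_ h1
    rw [e0]
    nlinarith [sq_nonneg (X 1 * N 2 - X 2 * N 1), sq_nonneg (X 1 * N 3 - X 3 * N 1),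
      sq_nonneg (X 2 * N 3 - X 3 * N 2), sq_nonneg (X 1), sq_nonneg (X 2), sq_nonneg (X 3)]
  have := lt_of_pow_lt_pow_left₀ 2 (by positivity) h
  linarith

theorem aux_comb (N X Z : Fin 4 → ℝ) (hN : eta N N = -1) (hN0 : 0 < N 0) (s t : ℝ) :
    0 ≤ s ^ 2 * (eta X X + eta X N ^ 2) - 2 * s * t * (eta Z X + eta Z N * eta X N)
      + t ^ 2 * (eta Z Z + eta Z N ^ 2) := by
  have h := aux_nonneg N (fun i => s * X i - t * Z i) hN hN0
  refine h.trans_eq ?_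
  unfold eta
  ring

/-- Quantitative positivity of the energy–momentum tensor (estimates (QZXN)/(alphanotation)). -/
theorem emtensor_positivity_quantitative (X N : Fin 4 → ℝ)
    (hNunit : eta N N = -1) (hN0 : 0 < N 0)
    (hX : eta X X < 0) (hX0 : 0 < X 0) :
    0 < (-eta X X) / (Real.sqrt (eta X X + (eta X N) ^ 2) - eta X N) ∧
      ∀ Z : Fin 4 → ℝ,
        2 * eta Z X * eta Z N - eta X N * eta Z Z ≥
          (-eta X X) / (Real.sqrt (eta X X + (eta X N) ^ 2) - eta X N) *
            (eta Z Z + 2 * (eta Z N) ^ 2) := by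
  have hneg := aux_neg X N hNunit hN0 hX hX0
  have hb2 := Real.sq_sqrt (aux_nonneg N X hNunit hN0)
  have hb := Real.sqrt_nonneg (eta X X + (eta X N) ^ 2)
  set b := Real.sqrt (eta X X + (eta X N) ^ 2) with hbdef
  have hd : 0 < b - eta X N := by linarith
  refine ⟨div_pos (by linarith) hd, fun Z => ?_⟩
  have hα : (-eta X X) / (b - eta X N) = -eta X N - b := by
    rw [div_eq_iff hd.ne']
    linear_combination hb2
  rw [hα]
  have hc := aux_comb N X Z hNunit hN0
  rw [← hb2] at hc
  set g := eta Z X + eta Z N * eta X N with hg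
  set w := eta Z Z + eta Z N ^ 2 with hw
  have key : 0 ≤ b * (eta Z N ^ 2 + w) + 2 * eta Z N * g := by
    rcases hb.eq_or_lt with h0 | hpos
    · have hg0 : g = 0 := by
        by_contra hne
        have h1 := hc ((w + 1) / (2 * g)) 1
        rw [← h0] at h1
        have : 2 * ((w + 1) / (2 * g)) * 1 * g = w + 1 := by field_simp
        rw [this] at h1
        linarith
      rw [← h0, hg0]; simp
    · have h1 := hc (-eta Z N) b
      refine nonneg_of_mul_nonneg_right (a := b) ?_ hpos
      linarith
  rw [hg, hw] at key
  linarith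
end
end

section
/- Positivity of the Riemannian metric G on spacelike slices (inequality (Gpositivity0)): let n, V ∈ ℝ⁴ with η(n,n) = −1 and η(V,V) < 0, and define the positive semidefinite form ḡ(X,Y) = η(X,Y) + η(n,X)·η(n,Y). Then η(n,V) ≠ 0, and for every X ∈ ℝ⁴, ḡ(X,X) − ḡ(V,X)² / η(n,V)² ≥ ( −η(V,V) / η(n,V)² ) · ḡ(X,X). -/
noncomputable section

/-- The projection of the metric away from a unit timelike vector `n`:
`ḡ(X,Y) = η(X,Y) + η(n,X)·η(n,Y)`. -/
def gbar (n X Y : Fin 4 → ℝ) : ℝ := eta X Y + eta n X * eta n Y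

/-- Vectors orthogonal to a unit timelike vector are not timelike. -/
theorem eta_nonneg_of_orth (n Y : Fin 4 → ℝ) (hn : eta n n = -1) (h : eta n Y = 0) :
    0 ≤ eta Y Y := by
  unfold eta at *
  generalize n 0 = a at *
  generalize n 1 = b at *
  generalize n 2 = c at *
  generalize n 3 = d at *
  generalize Y 0 = x at *
  generalize Y 1 = y at *
  generalize Y 2 = z at *
  generalize Y 3 = w at *
  have h1 : a * x = b * y + c * z + d * w := by linarith
  have h2 : a ^ 2 = 1 + (b ^ 2 + c ^ 2 + d ^ 2) := by nlinarith
  have h3 : (a * x) ^ 2 ≤ (b ^ 2 + c ^ 2 + d ^ 2) * (y ^ 2 + z ^ 2 + w ^ 2) := by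
    rw [h1]
    nlinarith [sq_nonneg (b * z - c * y), sq_nonneg (b * w - d * y), sq_nonneg (c * w - d * z)]
  have h4 : 0 < a ^ 2 := by rw [h2]; positivity
  have h5 : 0 ≤ a ^ 2 * (y ^ 2 + z ^ 2 + w ^ 2 - x ^ 2) := by
    have : 0 ≤ y ^ 2 + z ^ 2 + w ^ 2 := by positivity
    have h6 : a ^ 2 * (y ^ 2 + z ^ 2 + w ^ 2) =
        (1 + (b ^ 2 + c ^ 2 + d ^ 2)) * (y ^ 2 + z ^ 2 + w ^ 2) := by rw [h2]
    linarith
  have := nonneg_of_mul_nonneg_right h5 h4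
  linarith

theorem gbar_nonneg (n X : Fin 4 → ℝ) (hn : eta n n = -1) : 0 ≤ gbar n X X := by
  have h1 : eta n (fun i => X i + eta n X * n i) = eta n X + eta n X * eta n n := by
    simp only [eta]; ring
  have h2 : eta (fun i => X i + eta n X * n i) (fun i => X i + eta n X * n i)
      = eta X X + 2 * eta n X * eta n X + eta n X ^ 2 * eta n n := by
    simp only [eta]; ring
  have h := eta_nonneg_of_orth n _ hn (by rw [h1, hn]; ring)
  rw [h2, hn] at h
  unfold gbar
  linarith

theorem gbar_cauchy (n V X : Fin 4 → ℝ) (hn : eta n n = -1) :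
    gbar n V X ^ 2 ≤ gbar n V V * gbar n X X := by
  have h : ∀ t : ℝ, 0 ≤ gbar n X X * (t * t) + 2 * gbar n V X * t + gbar n V V := by
    intro t
    have h1 := gbar_nonneg n (fun i => V i + t * X i) hn
    have h2 : gbar n (fun i => V i + t * X i) (fun i => V i + t * X i)
        = gbar n X X * (t * t) + 2 * gbar n V X * t + gbar n V V := by
      simp only [gbar, eta]; ring
    rwa [h2] at h1
  have := discrim_le_zero h
  unfold discrim at this
  linarith

/-- Positivity of the Riemannian metric `G` on spacelike slices (inequality (Gpositivity0)). -/
theorem G_positivity (n V : Fin 4 → ℝ)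
    (hn : eta n n = -1) (hV : eta V V < 0) :
    eta n V ≠ 0 ∧
      ∀ X : Fin 4 → ℝ,
        gbar n X X - (gbar n V X) ^ 2 / (eta n V) ^ 2 ≥
          (-eta V V / (eta n V) ^ 2) * gbar n X X := by
  have h0 : eta n V ≠ 0 := fun h => absurd (eta_nonneg_of_orth n V hn h) (not_le.mpr hV)
  refine ⟨h0, fun X => ?_⟩
  have hp : 0 < eta n V ^ 2 := by positivity
  have hc := gbar_cauchy n V X hn
  have hv : gbar n V V = eta V V + eta n V ^ 2 := by unfold gbar; ring
  rw [hv] at hc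
  have key : gbar n X X - (gbar n V X) ^ 2 / (eta n V) ^ 2
      - (-eta V V / (eta n V) ^ 2) * gbar n X X
      = ((eta V V + eta n V ^ 2) * gbar n X X - gbar n V X ^ 2) / eta n V ^ 2 := by
    field_simp
    ring
  have := div_nonneg (sub_nonneg.mpr hc) hp.le
  linarith
end
end

section
/- Pointwise div–curl–tangential estimate for matrices (the algebraic core of Lemma `app:pwdiff` and Lemma `pwHlemma`): there exists a universal constant C > 0 such that for every real 3×3 matrix M and every unit vector n ∈ ℝ³, writing P = I − n nᵀ for the orthogonal projection onto the plane orthogonal to n, one has ‖M‖_F ≤ C·( |tr M| + ‖M − Mᵀ‖_F + ‖P·M‖_F ), where ‖·‖_F denotes the Frobenius norm and P·M is the matrix product. -/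
noncomputable section

open Matrix

/-- The Frobenius norm of a real 3×3 matrix. -/
def frob (M : Matrix (Fin 3) (Fin 3) ℝ) : ℝ :=
  Real.sqrt (∑ i, ∑ j, (M i j) ^ 2)

lemma entry_le_frob (M : Matrix (Fin 3) (Fin 3) ℝ) (i j : Fin 3) : |M i j| ≤ frob M := by
  unfold frob
  apply Real.abs_le_sqrt
  calc (M i j) ^ 2 ≤ ∑ j, (M i j) ^ 2 :=
        Finset.single_le_sum (f := fun j => (M i j) ^ 2) (fun _ _ => sq_nonneg _)
          (Finset.mem_univ j)
    _ ≤ _ := Finset.single_le_sum (f := fun i => ∑ j, (M i j) ^ 2)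
          (fun _ _ => Finset.sum_nonneg fun _ _ => sq_nonneg _) (Finset.mem_univ i)

lemma frob_le_of_entry (M : Matrix (Fin 3) (Fin 3) ℝ) (B : ℝ) (hB : 0 ≤ B)
    (h : ∀ i j, |M i j| ≤ B) : frob M ≤ 3 * B := by
  unfold frob
  apply Real.sqrt_le_iff.2 ⟨by positivity, ?_⟩
  calc ∑ i, ∑ j, (M i j) ^ 2 ≤ ∑ _i : Fin 3, ∑ _j : Fin 3, B ^ 2 :=
        Finset.sum_le_sum fun i _ => Finset.sum_le_sum fun j _ =>
          sq_le_sq.2 (by rw [abs_of_nonneg hB]; exact h i j)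
    _ = (3 * B) ^ 2 := by simp; ring

lemma entry_identity (M : Matrix (Fin 3) (Fin 3) ℝ) (n : Fin 3 → ℝ) (i j : Fin 3) :
    M i j = ((1 - vecMulVec n n) * M) i j + n i * (
      ∑ k, ((1 - vecMulVec n n) * M) j k * n k
      + n j * (trace M - ∑ k, ((1 - vecMulVec n n) * M) k k)
      - ∑ k, (M - Mᵀ) j k * n k) := by
  have hQ : ∀ a b, ((1 - vecMulVec n n) * M) a b = M a b - n a * ∑ k, n k * M k b := by
    intro a b
    rw [Matrix.sub_mul, Matrix.one_mul, Matrix.sub_apply, Matrix.mul_apply, Finset.mul_sum]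
    simp [vecMulVec_apply, mul_assoc]
  simp only [hQ, Matrix.trace, Matrix.diag, Matrix.sub_apply, Matrix.transpose_apply,
    Fin.sum_univ_three]
  ring

/-- Pointwise div–curl–tangential estimate for matrices (the algebraic core of
Lemma `app:pwdiff` and Lemma `pwHlemma`). -/
theorem pointwise_div_curl_tangential_estimate :
    ∃ C > (0 : ℝ), ∀ (M : Matrix (Fin 3) (Fin 3) ℝ) (n : Fin 3 → ℝ),
      (∑ i, (n i) ^ 2) = 1 →
      frob M ≤ C * (|Matrix.trace M| + frob (M - Mᵀ) +
        frob ((1 - Matrix.vecMulVec n n) * M)) := by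
  refine ⟨33, by norm_num, fun M n hn => ?_⟩
  have hI := entry_identity M n
  have hQ := entry_le_frob ((1 - vecMulVec n n) * M)
  have hA := entry_le_frob (M - Mᵀ)
  generalize (1 - vecMulVec n n) * M = Q at *
  generalize M - Mᵀ = A at *
  have hQ0 : 0 ≤ frob Q := Real.sqrt_nonneg _
  have hA0 : 0 ≤ frob A := Real.sqrt_nonneg _
  have ht0 := abs_nonneg (trace M)
  generalize hS : |trace M| + frob A + frob Q = S
  have hn1 : ∀ i, |n i| ≤ 1 := fun i => by
    rw [← sq_le_one_iff_abs_le_one, ← hn]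
    exact Finset.single_le_sum (f := fun i => (n i) ^ 2) (fun _ _ => sq_nonneg _)
      (Finset.mem_univ i)
  have hmul : ∀ (x : ℝ) (i : Fin 3) (B : ℝ), |x| ≤ B → |x * n i| ≤ B := fun x i B hx => by
    rw [abs_mul]
    exact (mul_le_of_le_one_right (abs_nonneg x) (hn1 i)).trans hx
  have hQS : ∀ i j, |Q i j| ≤ S := fun i j => by linarith [hQ i j]
  have hAS : ∀ i j, |A i j| ≤ S := fun i j => by linarith [hA i j]
  have htS : |trace M| ≤ S := by linarith
  have hS0 : 0 ≤ S := by linarith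
  have hsum : ∀ f : Fin 3 → ℝ, (∀ k, |f k| ≤ S) → |∑ k, f k| ≤ 3 * S := fun f hf => by
    refine (Finset.abs_sum_le_sum_abs _ _).trans ?_
    rw [Fin.sum_univ_three]
    linarith [hf 0, hf 1, hf 2]
  have := frob_le_of_entry M (11 * S) (by positivity) fun i j => by
    have h1 := hsum _ fun k => hmul _ k _ (hQS j k)
    have h2 := hsum _ fun k => hmul _ k _ (hAS j k)
    have h3 := hsum _ fun k => hQS k k
    have h4 := hmul (trace M - ∑ k, Q k k) j (4 * S)
      ((abs_sub _ _).trans (by linarith))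
    have h5 := hmul (∑ k, Q j k * n k + (trace M - ∑ k, Q k k) * n j - ∑ k, A j k * n k) i
      (10 * S) ((abs_sub _ _).trans (by
        linarith [abs_add_le (∑ k, Q j k * n k) ((trace M - ∑ k, Q k k) * n j)]))
    rw [hI i j, mul_comm (n i), mul_comm (n j)]
    refine (abs_add_le _ _).trans ?_
    linarith [hQS i j]
  linarith
end
end

section
/- Peetre-type symbol estimate (used in the proof of the second inequality of Lemma `lem:LeibnitzBasic`): there exists a constant C > 0 such that for all s ∈ [0, 1/2] and all ξ, η ∈ ℝ², | (1+‖ξ‖²)^{1/4} − (1+‖ξ−η‖²)^{1/4} | · (1+‖ξ‖²)^{s/2} ≤ C · (1+‖η‖²)^{(3/2−s)/2} · (1+‖ξ−η‖²)^{(s−1/2)/2}. -/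
noncomputable section

lemma peetre_aux1 {p q r x y z : ℝ} (hp : 0 ≤ p) (hq : 0 ≤ q) (hr : 0 ≤ r)
    (h : p ≤ q + r) (hx : x ^ 4 = 1 + p ^ 2) (hy : y ^ 4 = 1 + q ^ 2) (hz : z ^ 4 = 1 + r ^ 2) :
    x ^ 2 ≤ y ^ 2 + z ^ 2 := by
  have h1 : q ≤ y ^ 2 := abs_le_of_sq_le_sq' (by nlinarith) (by positivity) |>.2
  have h2 : r ≤ z ^ 2 := abs_le_of_sq_le_sq' (by nlinarith) (by positivity) |>.2
  have h3 : q * r ≤ y ^ 2 * z ^ 2 := mul_le_mul h1 h2 hr (by positivity)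
  have h4 : p ^ 2 ≤ (q + r) ^ 2 := pow_le_pow_left₀ hp h 2
  refine (abs_le_of_sq_le_sq' ?_ (by positivity)).2
  nlinarith

lemma peetre_aux2 {x y z t : ℝ} (hx : 0 < x) (hy : 0 < y) (hz : 1 ≤ z) (ht0 : 0 ≤ t)
    (ht1 : t ≤ 1) (h1 : x ^ 2 ≤ y ^ 2 + z ^ 2) (h2 : y ^ 2 ≤ x ^ 2 + z ^ 2) :
    |x - y| * x ^ t ≤ z ^ (3 - t) * y ^ (t - 1) := by
  have hg : x ^ t * y ^ (1 - t) ≤ x + y := by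
    have := Real.geom_mean_le_arith_mean2_weighted ht0 (sub_nonneg.2 ht1) hx.le hy.le (by ring)
    nlinarith
  have h3 : |x - y| * (x + y) ≤ z ^ 2 := by
    rw [← abs_of_pos (add_pos hx hy), ← abs_mul, abs_le]
    constructor <;> nlinarith
  have h4 : z ^ 2 ≤ z ^ (3 - t) := by
    rw [← Real.rpow_natCast]
    exact Real.rpow_le_rpow_of_exponent_le hz (by push_cast; linarith)
  have h5 : y ^ (1 - t) * y ^ (t - 1) = 1 := by
    rw [← Real.rpow_add hy]; simp
  calc |x - y| * x ^ t = |x - y| * (x ^ t * y ^ (1 - t)) * y ^ (t - 1) := by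
        rw [mul_assoc, mul_assoc, h5, mul_one]
    _ ≤ |x - y| * (x + y) * y ^ (t - 1) := by gcongr
    _ ≤ z ^ (3 - t) * y ^ (t - 1) := by gcongr; exact h3.trans h4

/-- Peetre-type symbol estimate used in the proof of the second inequality of
Lemma `lem:LeibnitzBasic`. -/
theorem peetre_symbol_estimate :
    ∃ C > (0 : ℝ), ∀ s ∈ Set.Icc (0 : ℝ) (1 / 2),
      ∀ ξ η : EuclideanSpace ℝ (Fin 2),
        |(1 + ‖ξ‖ ^ 2) ^ ((1 : ℝ) / 4) - (1 + ‖ξ - η‖ ^ 2) ^ ((1 : ℝ) / 4)| *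
            (1 + ‖ξ‖ ^ 2) ^ (s / 2) ≤
          C * (1 + ‖η‖ ^ 2) ^ ((3 / 2 - s) / 2) *
            (1 + ‖ξ - η‖ ^ 2) ^ ((s - 1 / 2) / 2) := by
  refine ⟨1, one_pos, fun s hs ξ η => ?_⟩
  obtain ⟨hs0, hs1⟩ := hs
  have key : ∀ p : ℝ, ((1 + p ^ 2) ^ ((1 : ℝ) / 4)) ^ 4 = 1 + p ^ 2 := fun p => by
    rw [← Real.rpow_natCast, ← Real.rpow_mul (by positivity)]; norm_num
  have e : ∀ p u v : ℝ, u = 1 / 4 * v →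
      (1 + p ^ 2) ^ u = ((1 + p ^ 2) ^ ((1 : ℝ) / 4)) ^ v := fun p u v h => by
    rw [← Real.rpow_mul (by positivity), h]
  rw [one_mul, e ‖ξ‖ (s / 2) (2 * s) (by ring), e ‖η‖ _ (3 - 2 * s) (by ring),
    e ‖ξ - η‖ ((s - 1 / 2) / 2) (2 * s - 1) (by ring)]
  have n1 : ‖ξ‖ ≤ ‖ξ - η‖ + ‖η‖ := by simpa using norm_add_le (ξ - η) η
  have n2 : ‖ξ - η‖ ≤ ‖ξ‖ + ‖η‖ := norm_sub_le _ _
  refine peetre_aux2 (by positivity) (by positivity)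
    (Real.one_le_rpow (by nlinarith [sq_nonneg ‖η‖]) (by norm_num)) (by linarith) (by linarith)
    (peetre_aux1 (norm_nonneg _) (norm_nonneg _) (norm_nonneg _) n1 (key _) (key _) (key _))
    (peetre_aux1 (norm_nonneg _) (norm_nonneg _) (norm_nonneg _) n2 (key _) (key _) (key _))
end
end

section
/- Friedrichs-type commutator estimate (the core of Lemma `lem:mutiplicationsmoothingcommute`, estimate (eq:smoothingvectorfieldcommute)): let B > 0 and let b : ℝ² → ℝ² be a C¹ vector field with sup_z ( ‖b(z)‖ + ‖Db(z)‖ ) ≤ B. Then there exists a constant C > 0, depending only on φ and B, such that for every ε ∈ (0,1] and every compactly supported C¹ function g : ℝ² → ℝ, ‖ S_ε(b·∇g) − b·∇(S_ε g) ‖_{L²(ℝ²)} ≤ C · ‖g‖_{L²(ℝ²)}, where b·∇g = b₁ ∂₁g + b₂ ∂₂g. In particular the bound is uniform in ε and involves no derivatives of g on the right-hand side. -/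
noncomputable section

open MeasureTheory
open scoped NNReal ENNReal

/-- The plane `ℝ²`. -/
abbrev E2 : Type := EuclideanSpace ℝ (Fin 2)

/-- The tangential smoothing operator `S_ε f = φ_ε ⋆ f`, where `φ_ε(z) = ε⁻²φ(z/ε)`. -/
def smoothOp (φ : E2 → ℝ) (ε : ℝ) (f : E2 → ℝ) (z : E2) : ℝ :=
  ∫ w : E2, (ε ^ 2)⁻¹ * φ (ε⁻¹ • w) * f (z - w)

/-- Cauchy-Schwarz against a weight. -/
lemma cs_weight (k f : E2 → ℝ≥0∞) (hk : Measurable k) (hf : Measurable f) :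
    (∫⁻ w, k w * f w) ^ 2 ≤ (∫⁻ w, k w) * ∫⁻ w, k w * f w ^ 2 := by
  have h := ENNReal.lintegral_mul_le_Lp_mul_Lq (volume : Measure E2) Real.HolderConjugate.two_two
    (f := fun w => k w ^ (1/2 : ℝ)) (g := fun w => k w ^ (1/2 : ℝ) * f w)
    (hk.pow_const _).aemeasurable ((hk.pow_const _).mul hf).aemeasurable
  have e1 : ∀ w, k w ^ (1/2 : ℝ) * (k w ^ (1/2 : ℝ) * f w) = k w * f w := by
    intro w
    rw [← mul_assoc, ← ENNReal.rpow_add_of_nonneg _ _ (by norm_num) (by norm_num)]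
    norm_num
  have e2 : ∀ w, (k w ^ (1/2 : ℝ)) ^ (2 : ℝ) = k w := by
    intro w
    rw [← ENNReal.rpow_mul]; norm_num
  have e3 : ∀ w, (k w ^ (1/2 : ℝ) * f w) ^ (2 : ℝ) = k w * f w ^ 2 := by
    intro w
    rw [ENNReal.mul_rpow_of_nonneg _ _ (by norm_num), e2, ENNReal.rpow_two]
  simp only [Pi.mul_apply, e1, e2, e3] at h
  calc _ ≤ ((∫⁻ w, k w) ^ (1/2 : ℝ) * (∫⁻ w, k w * f w ^ 2) ^ (1/2 : ℝ)) ^ 2 := by gcongr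
    _ = _ := by
      rw [← ENNReal.rpow_two, ENNReal.mul_rpow_of_nonneg _ _ (by norm_num),
        ← ENNReal.rpow_mul, ← ENNReal.rpow_mul]
      norm_num

lemma young2 (k f : E2 → ℝ≥0∞) (hk : Measurable k) (hf : Measurable f) :
    ∫⁻ z, (∫⁻ w, k w * f (z - w)) ^ 2 ≤ (∫⁻ w, k w) ^ 2 * ∫⁻ z, f z ^ 2 := by
  calc ∫⁻ z, (∫⁻ w, k w * f (z - w)) ^ 2
      ≤ ∫⁻ z, (∫⁻ w, k w) * ∫⁻ w, k w * f (z - w) ^ 2 := by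
        gcongr with z
        exact cs_weight k (fun w => f (z - w)) hk (by fun_prop)
    _ = (∫⁻ w, k w) * ∫⁻ z, ∫⁻ w, k w * f (z - w) ^ 2 := by
        rw [lintegral_const_mul]
        apply Measurable.lintegral_prod_right' (f := fun p : E2 × E2 => k p.2 * f (p.1 - p.2) ^ 2)
        fun_prop
    _ = (∫⁻ w, k w) * ∫⁻ w, ∫⁻ z, k w * f (z - w) ^ 2 := by
        rw [lintegral_lintegral_swap]
        apply Measurable.aemeasurable
        simp only [Function.uncurry_def]
        fun_prop
    _ = (∫⁻ w, k w) * ∫⁻ w, k w * ∫⁻ z, f z ^ 2 := by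
        congr 1
        apply lintegral_congr
        intro w
        rw [lintegral_const_mul _ (by fun_prop)]
        rw [lintegral_sub_right_eq_self (fun z => f z ^ 2) w]
    _ = _ := by
        rw [lintegral_mul_const _ hk, sq, mul_assoc]

lemma eLp_le (F g : E2 → ℝ) (K : E2 → ℝ) (hK : Continuous K) (hK0 : ∀ w, 0 ≤ K w)
    (hKi : Integrable K) (hg : Continuous g)
    (h : ∀ z, ‖F z‖ₑ ≤ ∫⁻ w, ENNReal.ofReal (K w) * ‖g (z - w)‖ₑ) :
    eLpNorm F 2 volume ≤ ENNReal.ofReal (∫ w, K w) * eLpNorm g 2 volume := by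
  have hsq : ∀ G : E2 → ℝ, eLpNorm G 2 volume ^ 2 = ∫⁻ x, ‖G x‖ₑ ^ 2 := by
    intro G
    have := eLpNorm_nnreal_pow_eq_lintegral (f := G) (μ := (volume : Measure E2)) (p := 2) two_ne_zero
    simpa using this
  rw [← ENNReal.pow_le_pow_left_iff two_ne_zero, mul_pow, hsq, hsq]
  rw [ofReal_integral_eq_lintegral_ofReal hKi (Filter.Eventually.of_forall hK0)]
  refine le_trans ?_ (young2 _ (fun w => ‖g w‖ₑ) (by fun_prop) (by fun_prop))
  gcongr with z
  exact h z

/-- Integration by parts identity for a fixed kernel. -/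
lemma comm_point (ψ g : E2 → ℝ) (v : E2 → E2) (hψ : ContDiff ℝ 1 ψ) (hψc : HasCompactSupport ψ)
    (hg : ContDiff ℝ 1 g) (hv : ContDiff ℝ 1 v) (z : E2) :
    ∫ w, ψ w * fderiv ℝ g (z - w) (v w) =
      ∫ w, (fderiv ℝ ψ w (v w) +
        ψ w * ∑ d, fderiv ℝ v w (EuclideanSpace.single d 1) d) * g (z - w) := by
  have hψ' := hψ.continuous_fderiv one_ne_zero
  have hg' := hg.continuous_fderiv one_ne_zero
  have hv' := hv.continuous_fderiv one_ne_zero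
  have hψd := hψ.differentiable one_ne_zero
  have hgd := hg.differentiable one_ne_zero
  have hvd := hv.differentiable one_ne_zero
  have hψ0 := hψ.continuous
  have hg0 := hg.continuous
  have hv0 := hv.continuous
  let e : Fin 2 → E2 := fun d => EuclideanSpace.single d 1
  have hexp : ∀ x : E2, x = ∑ d, x d • e d := by
    intro x
    ext i
    fin_cases i <;> simp [e, Fin.sum_univ_two]
  have hG : ∀ w u, fderiv ℝ (fun w => g (z - w)) w u = - fderiv ℝ g (z - w) u := by
    intro w u
    have h1 : HasFDerivAt (fun w => g (z - w)) ((fderiv ℝ g (z - w)).comp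
      (-(ContinuousLinearMap.id ℝ E2))) w := by
      apply HasFDerivAt.comp w (hgd _).hasFDerivAt
      exact (hasFDerivAt_id w).const_sub z
    rw [h1.fderiv]; simp
  have hvd1 : ∀ d w, HasFDerivAt (fun w => v w d)
      ((EuclideanSpace.proj d : E2 →L[ℝ] ℝ).comp (fderiv ℝ v w)) w := by
    intro d w
    exact (EuclideanSpace.proj d : E2 →L[ℝ] ℝ).hasFDerivAt.comp w (hvd w).hasFDerivAt
  have hP : ∀ d w, fderiv ℝ (fun w => ψ w * v w d) w (e d) =
      ψ w * fderiv ℝ v w (e d) d + v w d * fderiv ℝ ψ w (e d) := by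
    intro d w
    have : HasFDerivAt (fun w => ψ w * v w d) _ w := (hψd w).hasFDerivAt.mul (hvd1 d w)
    rw [this.fderiv]; simp
  have hψe : ∀ w, w ∉ tsupport ψ → ψ w = 0 := fun w => image_eq_zero_of_notMem_tsupport
  have hψe' : ∀ w, w ∉ tsupport ψ → fderiv ℝ ψ w = 0 := fun w hw =>
    image_eq_zero_of_notMem_tsupport (fun h => hw (tsupport_fderiv_subset ℝ h))
  have integ : ∀ f : E2 → ℝ, Continuous f → (∀ w, w ∉ tsupport ψ → f w = 0) → Integrable f := by
    intro f hf h0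
    exact hf.integrable_of_hasCompactSupport (HasCompactSupport.intro hψc h0)
  have i1 : ∀ d, Integrable (fun w => ψ w * v w d * fderiv ℝ g (z - w) (e d)) := by
    intro d
    refine integ _ (by fun_prop) fun w hw => by simp [hψe w hw]
  have i2 : ∀ d, Integrable (fun w => (ψ w * fderiv ℝ v w (e d) d +
      v w d * fderiv ℝ ψ w (e d)) * g (z - w)) := by
    intro d
    refine integ _ (by fun_prop) fun w hw => by simp [hψe w hw, hψe' w hw]
  have i3 : ∀ d, Integrable (fun w => ψ w * v w d * g (z - w)) := by
    intro d
    refine integ _ (by fun_prop) fun w hw => by simp [hψe w hw]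
  have key : ∀ d, ∫ w, ψ w * v w d * fderiv ℝ g (z - w) (e d) =
      ∫ w, (ψ w * fderiv ℝ v w (e d) d + v w d * fderiv ℝ ψ w (e d)) * g (z - w) := by
    intro d
    have := integral_mul_fderiv_eq_neg_fderiv_mul_of_integrable (μ := (volume : Measure E2))
      (f := fun w => ψ w * v w d) (g := fun w => g (z - w)) (v := e d)
      (by simpa only [hP] using i2 d)
      (by simp only [hG, mul_neg]; exact (i1 d).neg) (i3 d)
      (fun w _ => ((hψd w).hasFDerivAt.mul (hvd1 d w)).differentiableAt)
      (fun w _ => by fun_prop)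
    simp only [hG, hP, mul_neg, integral_neg] at this
    exact neg_injective this
  have l : ∀ w, ψ w * fderiv ℝ g (z - w) (v w) =
      ∑ d, ψ w * v w d * fderiv ℝ g (z - w) (e d) := by
    intro w
    conv_lhs => rw [hexp (v w)]
    simp only [map_sum, map_smul, smul_eq_mul, Finset.mul_sum, mul_assoc]
  have r : ∀ w, (fderiv ℝ ψ w (v w) +
        ψ w * ∑ d, fderiv ℝ v w (EuclideanSpace.single d 1) d) * g (z - w) =
      ∑ d, (ψ w * fderiv ℝ v w (e d) d + v w d * fderiv ℝ ψ w (e d)) * g (z - w) := by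
    intro w
    conv_lhs => rw [hexp (v w)]
    simp only [map_add, map_smul, smul_eq_mul, Fin.sum_univ_two, e]
    ring
  simp only [l, r]
  rw [integral_finsetSum _ fun d _ => i1 d, integral_finsetSum _ fun d _ => i2 d]
  exact Finset.sum_congr rfl fun d _ => key d

/-- Friedrichs-type commutator estimate (the core of Lemma
`lem:mutiplicationsmoothingcommute`, estimate (eq:smoothingvectorfieldcommute)). -/
theorem friedrichs_commutator (φ : E2 → ℝ)
    (hφ : ContDiff ℝ 1 φ)
    (hφsupp : ∀ z : E2, φ z ≠ 0 → ∀ i, |z i| ≤ 1)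
    (hφint : (∫ z : E2, φ z) = 1) :
    ∀ B > (0 : ℝ), ∃ C > (0 : ℝ), ∀ b : E2 → E2,
      ContDiff ℝ 1 b → (∀ z, ‖b z‖ + ‖fderiv ℝ b z‖ ≤ B) →
      ∀ ε ∈ Set.Ioc (0 : ℝ) 1, ∀ g : E2 → ℝ,
        ContDiff ℝ 1 g → HasCompactSupport g →
        eLpNorm (fun z =>
            smoothOp φ ε (fun y => ∑ d, b y d * fderiv ℝ g y (EuclideanSpace.single d 1)) z -
              ∑ d, b z d * fderiv ℝ (smoothOp φ ε g) z (EuclideanSpace.single d 1))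
            2 volume ≤
          ENNReal.ofReal C * eLpNorm g 2 volume := by
  intro B hB
  have hφc : HasCompactSupport φ := by
    apply HasCompactSupport.of_support_subset_isCompact (isCompact_closedBall (0 : E2) 2)
    intro z hz
    have h := hφsupp z hz
    rw [mem_closedBall_zero_iff, EuclideanSpace.norm_eq]
    apply Real.sqrt_le_iff.2
    refine ⟨by norm_num, ?_⟩
    rw [Fin.sum_univ_two]
    have h0 := h 0
    have h1 := h 1
    simp only [Real.norm_eq_abs]
    nlinarith [abs_nonneg (z 0), abs_nonneg (z 1)]
  have hφ' := hφ.continuous_fderiv one_ne_zero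
  have hφd := hφ.differentiable one_ne_zero
  have hφ0 := hφ.continuous
  let k : E2 → ℝ := fun u => ‖fderiv ℝ φ u‖ * (B * ‖u‖) + |φ u| * (2 * B)
  have hk : Continuous k := by fun_prop
  have hk0 : ∀ u, 0 ≤ k u := fun u => by positivity
  have hkc : HasCompactSupport k := by
    refine HasCompactSupport.intro hφc fun w hw => ?_
    have h1 : φ w = 0 := image_eq_zero_of_notMem_tsupport hw
    have h2 : fderiv ℝ φ w = 0 :=
      image_eq_zero_of_notMem_tsupport (fun h => hw (tsupport_fderiv_subset ℝ h))
    simp [k, h1, h2]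
  have hki : Integrable k := hk.integrable_of_hasCompactSupport hkc
  refine ⟨(∫ u, k u) + 1, by have := integral_nonneg (μ := (volume : Measure E2)) (f := k) hk0; positivity, ?_⟩
  intro b hb hbB ε hε g hg hgc
  obtain ⟨hε0, hε1⟩ := hε
  let ψ : E2 → ℝ := fun w => (ε ^ 2)⁻¹ * φ (ε⁻¹ • w)
  let K : E2 → ℝ := fun w => (ε ^ 2)⁻¹ * k (ε⁻¹ • w)
  have hεi : ε⁻¹ ≠ 0 := inv_ne_zero hε0.ne'
  have hψ : ContDiff ℝ 1 ψ := by
    apply contDiff_const.mul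
    exact hφ.comp (contDiff_const_smul _)
  have hψc : HasCompactSupport ψ := (hφc.comp_smul hεi).mul_left
  have hK : Continuous K := by fun_prop
  have hKi : Integrable K := ((hki.comp_smul hεi).const_mul _)
  have hKint : ∫ w, K w = ∫ u, k u := by
    simp only [K]
    rw [integral_const_mul, Measure.integral_comp_inv_smul_of_nonneg _ _ hε0.le]
    simp only [finrank_euclideanSpace, Fintype.card_fin, smul_eq_mul]
    field_simp
  have hψ' : ∀ w, fderiv ℝ ψ w = ((ε ^ 2)⁻¹ * ε⁻¹) • fderiv ℝ φ (ε⁻¹ • w) := by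
    intro w
    have h1 : HasFDerivAt (fun w : E2 => φ (ε⁻¹ • w)) ((fderiv ℝ φ (ε⁻¹ • w)).comp
        (ε⁻¹ • ContinuousLinearMap.id ℝ E2)) w :=
      HasFDerivAt.comp w (hφd _).hasFDerivAt ((hasFDerivAt_id w).const_smul ε⁻¹)
    have h2 := h1.const_mul ((ε ^ 2)⁻¹)
    rw [h2.fderiv]
    ext u
    simp [mul_assoc]
  have hg' := hg.continuous_fderiv one_ne_zero
  have hgd := hg.differentiable one_ne_zero
  have hbd := hb.differentiable one_ne_zero
  have hb0 := hb.continuous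
  have hψ0 := hψ.continuous
  have hexp : ∀ x : E2, ∑ d, x d • (EuclideanSpace.single d 1 : E2) = x := by
    intro x
    ext i
    fin_cases i <;> simp [Fin.sum_univ_two]
  have hlin : ∀ (L : E2 →L[ℝ] ℝ) (x : E2), ∑ d, x d * L (EuclideanSpace.single d 1) = L x := by
    intro L x
    conv_rhs => rw [← hexp x]
    simp only [map_sum, map_smul, smul_eq_mul]
  simp only [hlin]
  have hS : ∀ z u, fderiv ℝ (smoothOp φ ε g) z u = ∫ w, ψ w * fderiv ℝ g (z - w) u := by
    intro z u
    have hloc : LocallyIntegrable ψ (volume : Measure E2) := hψ0.locallyIntegrable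
    have h1 := HasCompactSupport.hasFDerivAt_convolution_right (μ := (volume : Measure E2))
      (ContinuousLinearMap.mul ℝ ℝ) hgc hloc hg z
    have h2 : smoothOp φ ε g = convolution ψ g (ContinuousLinearMap.mul ℝ ℝ) volume := by
      ext z; rfl
    rw [h2, h1.fderiv, convolution_precompR_apply _ hloc (hgc.fderiv ℝ) hg']
    rfl
  refine le_trans (eLp_le _ g K hK (fun w => by have := hk0 (ε⁻¹ • w); positivity) hKi
    hg.continuous ?_) ?_
  swap
  · rw [hKint]
    gcongr
    linarith
  intro z
  let v : E2 → E2 := fun w => b (z - w) - b z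
  have hv : ContDiff ℝ 1 v := by
    apply ContDiff.sub _ contDiff_const
    exact hb.comp (contDiff_const.sub contDiff_id)
  have integ : ∀ f : E2 → ℝ, Continuous f → (∀ w, w ∉ tsupport ψ → f w = 0) → Integrable f := by
    intro f hf h0
    exact hf.integrable_of_hasCompactSupport (HasCompactSupport.intro hψc h0)
  have hψe : ∀ w, w ∉ tsupport ψ → ψ w = 0 := fun w => image_eq_zero_of_notMem_tsupport
  have hF : smoothOp φ ε (fun y => fderiv ℝ g y (b y)) z - fderiv ℝ (smoothOp φ ε g) z (b z)
      = ∫ w, ψ w * fderiv ℝ g (z - w) (v w) := by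
    rw [hS]
    have : smoothOp φ ε (fun y => fderiv ℝ g y (b y)) z
      = ∫ w, ψ w * fderiv ℝ g (z - w) (b (z - w)) := rfl
    rw [this, ← integral_sub]
    · simp only [v, map_sub, mul_sub]
    · exact integ _ (by fun_prop) fun w hw => by simp [hψe w hw]
    · exact integ _ (by fun_prop) fun w hw => by simp [hψe w hw]
  rw [hF, comm_point ψ g v hψ hψc hg hv z]
  refine (enorm_integral_le_lintegral_enorm _).trans ?_
  gcongr with w
  rw [enorm_mul]
  gcongr
  rw [← ofReal_norm]
  apply ENNReal.ofReal_le_ofReal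
  have hbB' : ∀ x, ‖fderiv ℝ b x‖ ≤ B := fun x => by
    have := hbB x
    have := norm_nonneg (b x)
    linarith
  have hvw : ‖v w‖ ≤ B * ‖w‖ := by
    have := Convex.norm_image_sub_le_of_norm_fderiv_le (𝕜 := ℝ) (f := b) (s := Set.univ)
      (fun x _ => hbd x) (fun x _ => hbB' x) convex_univ (Set.mem_univ z) (Set.mem_univ (z - w))
    simpa [v] using this
  have hv' : ∀ u, fderiv ℝ v w u = - fderiv ℝ b (z - w) u := by
    intro u
    have h1 : HasFDerivAt v ((fderiv ℝ b (z - w)).comp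
      (-(ContinuousLinearMap.id ℝ E2))) w := by
      apply HasFDerivAt.sub_const
      apply HasFDerivAt.comp w (hbd _).hasFDerivAt
      exact (hasFDerivAt_id w).const_sub z
    rw [h1.fderiv]; simp
  have hdiv : ∀ d : Fin 2, |fderiv ℝ v w (EuclideanSpace.single d 1) d| ≤ B := by
    intro d
    rw [← Real.norm_eq_abs]
    refine (PiLp.norm_apply_le _ d).trans ?_
    rw [hv', norm_neg]
    refine ((fderiv ℝ b (z - w)).le_opNorm _).trans ?_
    simpa using hbB' (z - w)
  have hdiv2 : ‖∑ d : Fin 2, fderiv ℝ v w (EuclideanSpace.single d 1) d‖ ≤ 2 * B := by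
    rw [Fin.sum_univ_two, Real.norm_eq_abs]
    refine (abs_add_le _ _).trans ?_
    linarith [hdiv 0, hdiv 1]
  have hψn : ‖fderiv ℝ ψ w‖ = (ε ^ 2)⁻¹ * ε⁻¹ * ‖fderiv ℝ φ (ε⁻¹ • w)‖ := by
    rw [hψ', norm_smul, Real.norm_of_nonneg (by positivity)]
  calc _ ≤ ‖fderiv ℝ ψ w (v w)‖ + ‖ψ w * _‖ := norm_add_le _ _
    _ ≤ ‖fderiv ℝ ψ w‖ * (B * ‖w‖) + ‖ψ w‖ * (2 * B) := by
      rw [norm_mul]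
      gcongr
      exact ((fderiv ℝ ψ w).le_opNorm _).trans (by gcongr)
    _ = K w := by
      rw [hψn]
      simp only [K, k, ψ, norm_mul, norm_smul, Real.norm_eq_abs, abs_inv, abs_pow,
        abs_of_pos hε0]
      ring
end
end

section
/- Commutator of smoothing and multiplication against a derivative (estimate (eq:smoothingmultiplicationcommute) of Lemma `lem:mutiplicationsmoothingcommute`, case k = 0): let B > 0 and let f : ℝ² → ℝ be a C¹ function with sup_z ( |f(z)| + ‖∇f(z)‖ ) ≤ B. Then there exists a constant C > 0, depending only on φ and B, such that for every ε ∈ (0,1], every compactly supported C¹ function g : ℝ² → ℝ, and each d ∈ {1,2}, ‖ S_ε( f·∂_d g ) − f·S_ε( ∂_d g ) ‖_{L²(ℝ²)} ≤ C · ‖g‖_{L²(ℝ²)}. -/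
noncomputable section

open MeasureTheory
open scoped NNReal ENNReal

/-- Young inequality `L¹ * L² → L²`, in squared form. -/
theorem young_sq (k G : E2 → ℝ≥0∞) (hk : Measurable k) (hG : Measurable G) :
    ∫⁻ z, (∫⁻ w, k w * G (z - w)) ^ (2 : ℝ) ≤ (∫⁻ w, k w) ^ (2 : ℝ) * ∫⁻ z, G z ^ (2 : ℝ) := by
  have hk2 : ∀ w, (k w ^ (1 / 2 : ℝ)) ^ (2 : ℝ) = k w := fun w => by
    rw [← ENNReal.rpow_mul]; norm_num
  have hkk : ∀ w, k w ^ (1 / 2 : ℝ) * k w ^ (1 / 2 : ℝ) = k w := fun w => by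
    rw [← ENNReal.rpow_add_of_nonneg _ _ (by norm_num) (by norm_num)]; norm_num
  have h1 : ∀ z, (∫⁻ w, k w * G (z - w)) ^ (2 : ℝ)
      ≤ (∫⁻ w, k w) * ∫⁻ w, k w * G (z - w) ^ (2 : ℝ) := by
    intro z
    have hGz : Measurable fun w => G (z - w) := hG.comp (measurable_const.sub measurable_id)
    have h := ENNReal.lintegral_mul_le_Lp_mul_Lq (volume : Measure E2) (p := 2) (q := 2)
      (by constructor <;> norm_num)
      (f := fun w => k w ^ (1 / 2 : ℝ)) (g := fun w => k w ^ (1 / 2 : ℝ) * G (z - w))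
      (hk.pow_const _).aemeasurable ((hk.pow_const _).mul hGz).aemeasurable
    simp only [Pi.mul_apply, ← mul_assoc, hkk, hk2,
      ENNReal.mul_rpow_of_nonneg _ _ (zero_le_two : (0 : ℝ) ≤ 2)] at h
    refine (ENNReal.rpow_le_rpow h zero_le_two).trans ?_
    rw [ENNReal.mul_rpow_of_nonneg _ _ (zero_le_two : (0 : ℝ) ≤ 2), ← ENNReal.rpow_mul,
      ← ENNReal.rpow_mul]
    norm_num
  have hm : Measurable (Function.uncurry fun (z w : E2) => k w * G (z - w) ^ (2 : ℝ)) :=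
    (hk.comp measurable_snd).mul
      ((hG.comp (measurable_fst.sub measurable_snd)).pow_const _)
  calc ∫⁻ z, (∫⁻ w, k w * G (z - w)) ^ (2 : ℝ)
      ≤ ∫⁻ z, (∫⁻ w, k w) * ∫⁻ w, k w * G (z - w) ^ (2 : ℝ) := lintegral_mono h1
    _ = (∫⁻ w, k w) * ∫⁻ z, ∫⁻ w, k w * G (z - w) ^ (2 : ℝ) :=
        lintegral_const_mul _ hm.lintegral_prod_right'
    _ = (∫⁻ w, k w) * ∫⁻ w, ∫⁻ z, k w * G (z - w) ^ (2 : ℝ) := by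
        rw [lintegral_lintegral_swap hm.aemeasurable]
    _ = (∫⁻ w, k w) * ∫⁻ w, k w * ∫⁻ z, G z ^ (2 : ℝ) := by
        congr 1
        refine lintegral_congr fun w => ?_
        have hGw : Measurable fun z => G (z - w) ^ (2 : ℝ) :=
          (hG.comp (measurable_id.sub measurable_const)).pow_const _
        rw [lintegral_const_mul _ hGw,
          lintegral_sub_right_eq_self (fun z => G z ^ (2 : ℝ)) w]
    _ = _ := by
        rw [lintegral_mul_const _ hk, ← mul_assoc]
        congr 1
        rw [ENNReal.rpow_two, sq]

theorem young_eLpNorm (T g : E2 → ℝ) (K : E2 → ℝ) (hK : Measurable K) (hK0 : ∀ w, 0 ≤ K w)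
    (hKi : Integrable K) (hg : Measurable g)
    (h : ∀ z, ‖T z‖ₑ ≤ ∫⁻ w, ENNReal.ofReal (K w) * ‖g (z - w)‖ₑ) :
    eLpNorm T 2 volume ≤ ENNReal.ofReal (∫ w, K w) * eLpNorm g 2 volume := by
  have hy := young_sq (fun w => ENNReal.ofReal (K w)) (fun z => ‖g z‖ₑ) hK.ennreal_ofReal hg.enorm
  rw [← ofReal_integral_eq_lintegral_ofReal hKi (Filter.Eventually.of_forall hK0)] at hy
  rw [eLpNorm_eq_lintegral_rpow_enorm_toReal two_ne_zero ENNReal.ofNat_ne_top,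
    eLpNorm_eq_lintegral_rpow_enorm_toReal two_ne_zero ENNReal.ofNat_ne_top]
  simp only [ENNReal.toReal_ofNat]
  have h2 : ∫⁻ z, ‖T z‖ₑ ^ (2 : ℝ) ≤
      ENNReal.ofReal (∫ w, K w) ^ (2 : ℝ) * ∫⁻ z, ‖g z‖ₑ ^ (2 : ℝ) :=
    (lintegral_mono fun z => ENNReal.rpow_le_rpow (h z) zero_le_two).trans hy
  refine (ENNReal.rpow_le_rpow h2 (by norm_num)).trans ?_
  rw [ENNReal.mul_rpow_of_nonneg _ _ (by norm_num : (0 : ℝ) ≤ 1 / 2), ← ENNReal.rpow_mul]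
  norm_num

/-- Integration by parts for the commutator. -/
theorem commutator_eq (ψ f g : E2 → ℝ) (hψ : ContDiff ℝ 1 ψ) (hψc : HasCompactSupport ψ)
    (hf : ContDiff ℝ 1 f) (hg : ContDiff ℝ 1 g) (e z : E2) :
    (∫ w, ψ w * (f (z - w) * fderiv ℝ g (z - w) e)) - f z * ∫ w, ψ w * fderiv ℝ g (z - w) e
      = ∫ w, (fderiv ℝ ψ w e * (f (z - w) - f z) - ψ w * fderiv ℝ f (z - w) e) * g (z - w) := by
  have cψ := hψ.continuous
  have cf := hf.continuous
  have cg := hg.continuous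
  have cψ' : Continuous fun w => fderiv ℝ ψ w e :=
    (hψ.continuous_fderiv one_ne_zero).clm_apply continuous_const
  have cf' : Continuous fun w => fderiv ℝ f (z - w) e :=
    ((hf.continuous_fderiv one_ne_zero).comp (continuous_const.sub continuous_id)).clm_apply
      continuous_const
  have cg' : Continuous fun w => fderiv ℝ g (z - w) e :=
    ((hg.continuous_fderiv one_ne_zero).comp (continuous_const.sub continuous_id)).clm_apply
      continuous_const
  have hψc' : HasCompactSupport fun w => fderiv ℝ ψ w e := hψc.fderiv_apply ℝ e
  have dsub : ∀ (u : E2 → ℝ), ContDiff ℝ 1 u → ∀ w,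
      HasFDerivAt (fun w => u (z - w)) (-(fderiv ℝ u (z - w))) w := by
    intro u hu w
    have h1 := ((hu.differentiable one_ne_zero) (z - w)).hasFDerivAt
    have h2 : HasFDerivAt (fun w : E2 => z - w) (-(ContinuousLinearMap.id ℝ E2)) w :=
      (hasFDerivAt_id w).const_sub z
    have h3 := h1.comp w h2
    have h4 : (fderiv ℝ u (z - w)).comp (-(ContinuousLinearMap.id ℝ E2))
        = -(fderiv ℝ u (z - w)) := by
      ext; simp
    rw [h4] at h3
    exact h3
  have dF : ∀ w, HasFDerivAt (fun w => ψ w * (f (z - w) - f z))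
      (ψ w • (-(fderiv ℝ f (z - w))) + (f (z - w) - f z) • fderiv ℝ ψ w) w := fun w =>
    ((hψ.differentiable one_ne_zero) w).hasFDerivAt.mul ((dsub f hf w).sub_const (f z))
  have key := integral_mul_fderiv_eq_neg_fderiv_mul_of_integrable (μ := (volume : Measure E2))
    (f := fun w => ψ w * (f (z - w) - f z)) (g := fun w => g (z - w)) (v := e) ?_ ?_ ?_
    (fun w _ => (dF w).differentiableAt) (fun w _ => (dsub g hg w).differentiableAt)
  · simp only [(dF _).fderiv, (dsub g hg _).fderiv] at key
    have i1 : Integrable fun w => ψ w * (f (z - w) * fderiv ℝ g (z - w) e) :=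
      Continuous.integrable_of_hasCompactSupport (by fun_prop) hψc.mul_right
    have i2 : Integrable fun w => ψ w * fderiv ℝ g (z - w) e :=
      Continuous.integrable_of_hasCompactSupport (by fun_prop) hψc.mul_right
    rw [← integral_const_mul, ← integral_sub i1 (i2.const_mul _)]
    rw [← neg_inj, ← integral_neg]
    convert key using 1
    · congr 1; ext w; simp; ring
    · congr 2; ext w; simp only [add_apply, smul_apply, neg_apply, smul_eq_mul]; ring
  · simp only [(dF _).fderiv]
    refine Continuous.integrable_of_hasCompactSupport (f := fun w => (ψ w • (-(fderiv ℝ f (z - w))) + (f (z - w) - f z) • fderiv ℝ ψ w) e * g (z - w)) ?_ ?_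
    · simp; fun_prop
    · simp only [add_apply, smul_apply, smul_eq_mul]
      exact (hψc.mul_right.add hψc'.mul_left).mul_right
  · simp only [(dsub g hg _).fderiv]
    refine Continuous.integrable_of_hasCompactSupport (f := fun w => ψ w * (f (z - w) - f z) * (-fderiv ℝ g (z - w)) e) ?_ hψc.mul_right.mul_right
    simp; fun_prop
  · exact Continuous.integrable_of_hasCompactSupport (by fun_prop) hψc.mul_right.mul_right

/-- Commutator of smoothing and multiplication against a derivative
(estimate (eq:smoothingmultiplicationcommute) of Lemma
`lem:mutiplicationsmoothingcommute`, case k = 0). -/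
theorem smoothing_multiplication_commutator (φ : E2 → ℝ)
    (hφ : ContDiff ℝ 1 φ)
    (hφsupp : ∀ z : E2, φ z ≠ 0 → ∀ i, |z i| ≤ 1)
    (hφint : (∫ z : E2, φ z) = 1) :
    ∀ B > (0 : ℝ), ∃ C > (0 : ℝ), ∀ f : E2 → ℝ,
      ContDiff ℝ 1 f → (∀ z, |f z| + ‖fderiv ℝ f z‖ ≤ B) →
      ∀ ε ∈ Set.Ioc (0 : ℝ) 1, ∀ g : E2 → ℝ,
        ContDiff ℝ 1 g → HasCompactSupport g → ∀ d : Fin 2,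
        eLpNorm (fun z =>
            smoothOp φ ε (fun y => f y * fderiv ℝ g y (EuclideanSpace.single d 1)) z -
              f z * smoothOp φ ε (fun y => fderiv ℝ g y (EuclideanSpace.single d 1)) z)
            2 volume ≤
          ENNReal.ofReal C * eLpNorm g 2 volume := by
  intro B hB
  have hφc : HasCompactSupport φ := by
    refine HasCompactSupport.of_support_subset_isCompact (isCompact_closedBall (0 : E2) 2) ?_
    intro z hz
    have h := hφsupp z hz
    rw [mem_closedBall_zero_iff, EuclideanSpace.norm_eq, Fin.sum_univ_two]
    refine Real.sqrt_le_iff.2 ⟨by norm_num, ?_⟩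
    have h0 := h 0
    have h1 := h 1
    simp only [Real.norm_eq_abs]
    nlinarith [abs_nonneg (z 0), abs_nonneg (z 1)]
  have cφ' := hφ.continuous_fderiv one_ne_zero
  have cφ := hφ.continuous
  set k : E2 → ℝ := fun w => ‖w‖ * ‖fderiv ℝ φ w‖ + |φ w| with hk
  have ck : Continuous k := by fun_prop
  have kc : HasCompactSupport k := (hφc.fderiv ℝ).norm.mul_left.add hφc.norm
  have k0 : ∀ w, 0 ≤ k w := fun w => by positivity
  have ki : Integrable k := ck.integrable_of_hasCompactSupport kc
  have kI : 0 ≤ ∫ w, k w := integral_nonneg k0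
  refine ⟨B * (∫ w, k w) + 1, by positivity, ?_⟩
  intro f hf hfB ε hε g hg hgc d
  have ε0 : 0 < ε := hε.1
  set e : E2 := EuclideanSpace.single d 1 with he
  have he1 : ‖e‖ = 1 := by simp [he]
  set ψ : E2 → ℝ := fun w => (ε ^ 2)⁻¹ * φ (ε⁻¹ • w) with hψdef
  have hψ : ContDiff ℝ 1 ψ := contDiff_const.mul (hφ.comp (contDiff_const_smul _))
  have hψc : HasCompactSupport ψ := (hφc.comp_smul (inv_ne_zero ε0.ne')).mul_left
  have dψ : ∀ w, fderiv ℝ ψ w e = (ε ^ 2)⁻¹ * (ε⁻¹ * fderiv ℝ φ (ε⁻¹ • w) e) := by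
    intro w
    have h1 := ((hφ.differentiable one_ne_zero) (ε⁻¹ • w)).hasFDerivAt
    have h2 : HasFDerivAt (fun w : E2 => ε⁻¹ • w) (ε⁻¹ • (ContinuousLinearMap.id ℝ E2)) w :=
      (hasFDerivAt_id w).const_smul ε⁻¹
    have h3 := (h1.comp w h2).const_mul ((ε ^ 2)⁻¹)
    have h4 : HasFDerivAt ψ _ w := h3
    rw [h4.fderiv]
    simp
  set K : E2 → ℝ := fun w => B * ((ε ^ 2)⁻¹ * k (ε⁻¹ • w)) with hKdef
  have cK : Continuous K := by fun_prop
  have hKi : Integrable K :=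
    ((ki.comp_smul (inv_ne_zero ε0.ne')).const_mul _).const_mul _
  have hKI : ∫ w, K w = B * ∫ w, k w := by
    simp only [hKdef]
    rw [integral_const_mul, integral_const_mul,
      Measure.integral_comp_inv_smul_of_nonneg _ _ ε0.le]
    simp
    field_simp
    simp
  have hpt : ∀ z w, |fderiv ℝ ψ w e * (f (z - w) - f z) - ψ w * fderiv ℝ f (z - w) e| ≤ K w := by
    intro z w
    have hB' : ∀ x, ‖fderiv ℝ f x‖ ≤ B := fun x => by
      have := hfB x; have := abs_nonneg (f x); linarith
    have a1 : |f (z - w) - f z| ≤ B * ‖w‖ := by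
      have := Convex.norm_image_sub_le_of_norm_fderiv_le (𝕜 := ℝ) (f := f) (s := Set.univ)
        (x := z) (y := z - w) (fun x _ => (hf.differentiable one_ne_zero) x) (fun x _ => hB' x)
        convex_univ (Set.mem_univ _) (Set.mem_univ _)
      simpa using this
    have a2 : |fderiv ℝ f (z - w) e| ≤ B := by
      have := (fderiv ℝ f (z - w)).le_opNorm e
      rw [he1, mul_one] at this
      exact this.trans (hB' _)
    have a3 : |fderiv ℝ φ (ε⁻¹ • w) e| ≤ ‖fderiv ℝ φ (ε⁻¹ • w)‖ := by
      have := (fderiv ℝ φ (ε⁻¹ • w)).le_opNorm e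
      rwa [he1, mul_one] at this
    have a4 : ‖ε⁻¹ • w‖ = ε⁻¹ * ‖w‖ := by
      rw [norm_smul, Real.norm_eq_abs, abs_of_pos (inv_pos.2 ε0)]
    refine (abs_sub _ _).trans ?_
    rw [abs_mul, abs_mul, dψ]
    simp only [hKdef, hk, hψdef, a4, abs_mul, abs_of_pos (inv_pos.2 ε0),
      abs_of_pos (inv_pos.2 (pow_pos ε0 2))]
    have ei := inv_pos.2 ε0
    have ei2 := inv_pos.2 (pow_pos ε0 2)
    calc _ ≤ (ε ^ 2)⁻¹ * (ε⁻¹ * ‖fderiv ℝ φ (ε⁻¹ • w)‖) * (B * ‖w‖)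
          + (ε ^ 2)⁻¹ * |φ (ε⁻¹ • w)| * B := by gcongr
      _ = _ := by ring
  have main := young_eLpNorm (fun z => smoothOp φ ε (fun y => f y * fderiv ℝ g y e) z -
      f z * smoothOp φ ε (fun y => fderiv ℝ g y e) z) g K cK.measurable
    (fun w => by have := k0 (ε⁻¹ • w); positivity) hKi hg.continuous.measurable ?_
  · refine main.trans ?_
    rw [hKI]
    gcongr
    linarith
  · intro z
    have := commutator_eq ψ f g hψ hψc hf hg e z
    simp only [smoothOp]
    rw [this]
    refine (enorm_integral_le_lintegral_enorm _).trans (lintegral_mono fun w => ?_)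
    rw [enorm_mul]
    gcongr
    rw [Real.enorm_eq_ofReal_abs]
    exact ENNReal.ofReal_le_ofReal (hpt z w)
end
end
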